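/- Let (X, f, x₀) be a minimal counting system, α an infinite type, and # the unique iterator for (X, f, x₀) on α. Then there exists a unique binary operation ⊕ on X satisfying (a0) x ⊕ x₀ = x for all x ∈ X and (a1) x ⊕ f(x') = f(x ⊕ x') for all x, x' ∈ X. This operation is associative and commutative, satisfies #(A) ⊕ #(B) = #(A ∪ B) whenever A, B : Finset α are disjoint, and for all x₁, x₂ ∈ X there exists x ∈ X with either x₁ = x₂ ⊕ x or x₂ = x₁ ⊕ x. Moreover, ⊕ is the unique binary operation on X satisfying #(A) ⊕ #(B) = #(A ∪ B) for all disjoint A, B : Finset α. -/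

import Mathlib

/-!
By minimality every element of `X` has the form `f^[n] x₀`, and the iterator is
`A ↦ f^[A.card] x₀`. The recursion (a0), (a1) forces `x ⊕ f^[n] x₀ = f^[n] x`, so
`f^[m] x₀ ⊕ f^[n] x₀ = f^[m + n] x₀`, and all the algebraic claims are inherited from `ℕ`.
For existence, choose for each `y` an `n` with `f^[n] x₀ = y` and put `x ⊕ y = f^[n] x`;
this does not depend on the choice since the iterates of `f` commute and
`x` is itself an iterate of `x₀`. The characterization by disjoint unions
follows because an infinite type has disjoint finite sets of any two prescribed cardinalities.
-/

theorem exists_iterate_eq_of_minimal {X : Type*} {f : X → X} {x₀ : X}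
    (hmin : ∀ S : Set X, x₀ ∈ S → (∀ x ∈ S, f x ∈ S) → S = Set.univ) (x : X) :
    ∃ n : ℕ, f^[n] x₀ = x := by
  have h := hmin {x | ∃ n : ℕ, f^[n] x₀ = x} ⟨0, rfl⟩ (by
    rintro _ ⟨n, rfl⟩
    exact ⟨n + 1, Function.iterate_succ_apply' f n x₀⟩)
  have hx : x ∈ (Set.univ : Set X) := Set.mem_univ x
  rwa [← h] at hx

theorem iterator_eq_iterate_card {X : Type*} {f : X → X} {x₀ : X}
    {α : Type*} [DecidableEq α] {it : Finset α → X} (h0 : it ∅ = x₀)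
    (h1 : ∀ (A : Finset α) (a : α), a ∉ A → it (insert a A) = f (it A)) (A : Finset α) :
    it A = f^[A.card] x₀ := by
  induction A using Finset.induction_on with
  | empty => simpa using h0
  | insert a A ha ih =>
    rw [h1 A a ha, ih, Finset.card_insert_of_notMem ha, Function.iterate_succ_apply']

theorem op_iterate_eq {X : Type*} {f : X → X} {x₀ : X} {op : X → X → X}
    (a0 : ∀ x : X, op x x₀ = x) (a1 : ∀ x x' : X, op x (f x') = f (op x x'))
    (x : X) (n : ℕ) : op x (f^[n] x₀) = f^[n] x := by
  induction n with
  | zero => exact a0 x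
  | succ n ih => rw [Function.iterate_succ_apply', a1, ih, Function.iterate_succ_apply']

theorem exists_disjoint_card_eq (α : Type*) [DecidableEq α] [Infinite α] (m n : ℕ) :
    ∃ A B : Finset α, Disjoint A B ∧ A.card = m ∧ B.card = n := by
  obtain ⟨C, hC⟩ := Infinite.exists_subset_card_eq α (m + n)
  obtain ⟨A, hAC, hA⟩ := Finset.exists_subset_card_eq (s := C) (n := m) (by omega)
  refine ⟨A, C \ A, Finset.disjoint_sdiff, hA, ?_⟩
  rw [Finset.card_sdiff_of_subset hAC]
  omega

/-- Addition for a minimal counting system `(X, f, x₀)` with unique iterator `it` on an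
infinite type `α`: there is a unique binary operation `⊕` on `X` with `x ⊕ x₀ = x` and
`x ⊕ f x' = f (x ⊕ x')`; it is associative, commutative, satisfies
`it A ⊕ it B = it (A ∪ B)` for disjoint `A, B`, any two elements are comparable by
addition, and it is the unique operation satisfying `it A ⊕ it B = it (A ∪ B)` for all
disjoint `A, B`. -/
theorem minimal_addition {X : Type*} (f : X → X) (x₀ : X)
    (hmin : ∀ S : Set X, x₀ ∈ S → (∀ x ∈ S, f x ∈ S) → S = Set.univ)
    {α : Type*} [DecidableEq α] [Infinite α] (it : Finset α → X)
    (h0 : it ∅ = x₀)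
    (h1 : ∀ (A : Finset α) (a : α), a ∉ A → it (insert a A) = f (it A)) :
    (∃! op : X → X → X,
      (∀ x : X, op x x₀ = x) ∧ (∀ x x' : X, op x (f x') = f (op x x'))) ∧
      ∀ op : X → X → X,
        ((∀ x : X, op x x₀ = x) ∧ (∀ x x' : X, op x (f x') = f (op x x'))) →
        (∀ x y zz : X, op (op x y) zz = op x (op y zz)) ∧
        (∀ x y : X, op x y = op y x) ∧
        (∀ A B : Finset α, Disjoint A B → op (it A) (it B) = it (A ∪ B)) ∧
        (∀ x₁ x₂ : X, ∃ x : X, x₁ = op x₂ x ∨ x₂ = op x₁ x) ∧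
        (∀ op' : X → X → X,
          (∀ A B : Finset α, Disjoint A B → op' (it A) (it B) = it (A ∪ B)) →
          op' = op) := by
  have hit := iterator_eq_iterate_card h0 h1
  have hsurj := exists_iterate_eq_of_minimal hmin
  refine ⟨?_, ?_⟩
  · choose idx hidx using hsurj
    -- The value `f^[n] x` depends only on `f^[n] x₀`, because `x` is an iterate of `x₀`.
    have hwd : ∀ (x : X) (n k : ℕ), f^[n] x₀ = f^[k] x₀ → f^[n] x = f^[k] x := by
      intro x n k h
      rw [← hidx x, ← Function.iterate_add_apply, ← Function.iterate_add_apply,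
        Nat.add_comm n, Nat.add_comm k, Function.iterate_add_apply, h,
        Function.iterate_add_apply]
    refine ⟨fun x y => f^[idx y] x, ⟨fun x => hwd x _ 0 (hidx x₀), fun x y => ?_⟩, ?_⟩
    · refine (hwd x _ (idx y + 1) ?_).trans (Function.iterate_succ_apply' f _ x)
      rw [hidx, Function.iterate_succ_apply', hidx]
    · rintro op ⟨a0, a1⟩
      funext x y
      have h := op_iterate_eq a0 a1 x (idx y)
      rwa [hidx] at h
  · rintro op ⟨a0, a1⟩
    have hadd : ∀ m n : ℕ, op (f^[m] x₀) (f^[n] x₀) = f^[m + n] x₀ := fun m n => by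
      rw [op_iterate_eq a0 a1, ← Function.iterate_add_apply, Nat.add_comm]
    refine ⟨fun x y z => ?_, fun x y => ?_, fun A B hAB => ?_, fun x y => ?_, fun op' h' => ?_⟩
    · obtain ⟨l, rfl⟩ := hsurj x
      obtain ⟨m, rfl⟩ := hsurj y
      obtain ⟨n, rfl⟩ := hsurj z
      simp only [hadd, Nat.add_assoc]
    · obtain ⟨m, rfl⟩ := hsurj x
      obtain ⟨n, rfl⟩ := hsurj y
      rw [hadd, hadd, Nat.add_comm]
    · rw [hit, hit, hit, hadd, Finset.card_union_of_disjoint hAB]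
    · obtain ⟨m, rfl⟩ := hsurj x
      obtain ⟨n, rfl⟩ := hsurj y
      rcases Nat.le_total n m with h | h
      · exact ⟨f^[m - n] x₀, Or.inl (by rw [hadd, Nat.add_sub_cancel' h])⟩
      · exact ⟨f^[n - m] x₀, Or.inr (by rw [hadd, Nat.add_sub_cancel' h])⟩
    · funext x y
      obtain ⟨m, rfl⟩ := hsurj x
      obtain ⟨n, rfl⟩ := hsurj y
      obtain ⟨A, B, hAB, rfl, rfl⟩ := exists_disjoint_card_eq α m n
      rw [hadd, ← Finset.card_union_of_disjoint hAB, ← hit, ← hit, ← hit, h' A B hAB]
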